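/- Let k ≥ 1, m ≥ 2, let q : ℝ^{k+1}_+ → ℝ and φ : ℝ^m_+ → ℝ both satisfy the cost-function conditions, let r ∈ {1, 2, ∞}, let c ∈ ℝ^k_+ and d = (d_1,…,d_m) ∈ ℝ^m_+, and set c' = (c, d_1 + ⋯ + d_m) ∈ ℝ^{k+1}_+ and c'' = (c,d) ∈ ℝ^{k+m}_+. Define q̃(x,y) = q(x, φ(y)) for x ∈ ℝ^k_+, y ∈ ℝ^m_+. If the profit operator Π_q is injective on L^r_{I−c'}(ℝ^{k+1}_+) and Π_φ is injective on L^r_{I−d}(ℝ^m_+), then q̃ satisfies the cost-function conditions and Π_{q̃} is injective on L^r_{I−c''}(ℝ^{k+m}_+). -/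

import Mathlib

open MeasureTheory Complex Set ENNReal

noncomputable section

/-- The positive orthant `ℝ^n_+`. -/
def posOrth (n : ℕ) : Set (Fin n → ℝ) := {x | ∀ i, 0 < x i}

/-- `q` satisfies the cost-function conditions: `C¹` on `ℝ^n_+`, positive,
positively homogeneous of degree one, with bounded level sets. -/
def IsCostFun (n : ℕ) (q : (Fin n → ℝ) → ℝ) : Prop :=
  ContDiffOn ℝ 1 q (posOrth n) ∧
  (∀ x ∈ posOrth n, 0 < q x) ∧
  (∀ lam : ℝ, 0 < lam → ∀ x ∈ posOrth n, q (fun i => lam * x i) = lam * q x) ∧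
  (∀ t : ℝ, Bornology.IsBounded {x | x ∈ posOrth n ∧ q x = t})

/-- Membership in `L^r_c(ℝ^n_+)` for `r ∈ [1,∞]` (with `r = ⊤` the weighted-`L^∞`
condition `ess sup |f(x) x^c| < ∞`, and otherwise `∫ |f|^r x^{rc-I} < ∞`). -/
def MemSpaceR (n : ℕ) (r : ℝ≥0∞) (c : Fin n → ℝ) (f : (Fin n → ℝ) → ℝ) : Prop :=
  AEStronglyMeasurable f (volume.restrict (posOrth n)) ∧
  if r = ⊤ then
    ∃ K : ℝ, ∀ᵐ x ∂(volume.restrict (posOrth n)), |f x * ∏ i, x i ^ c i| ≤ K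
  else
    IntegrableOn (fun x => |f x| ^ r.toReal * ∏ i, x i ^ (r.toReal * c i - 1)) (posOrth n)

/-- The profit operator `(Π_q f)(p₀, p)`. -/
def Piq (n : ℕ) (q : (Fin n → ℝ) → ℝ) (f : (Fin n → ℝ) → ℝ)
    (p0 : ℝ) (p : Fin n → ℝ) : ℝ :=
  ∫ x in posOrth n, max 0 (p0 - q (fun i => p i * x i)) * f x

/-- `Π_q` is injective on `L^r_{I-c}(ℝ^n_+)`. -/
def PiqInj (n : ℕ) (r : ℝ≥0∞) (q : (Fin n → ℝ) → ℝ) (c : Fin n → ℝ) : Prop :=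
  ∀ f : (Fin n → ℝ) → ℝ, MemSpaceR n r (fun i => 1 - c i) f →
    (∀ p0 : ℝ, 0 < p0 → ∀ p ∈ posOrth n, Piq n q f p0 p = 0) →
    ∀ᵐ x ∂(volume.restrict (posOrth n)), f x = 0

/-- The composed cost function `q̃(x,y) = q(x, φ(y))` on `ℝ^{k+m}_+`. -/
def nestedCost (k m : ℕ) (q : (Fin (k + 1) → ℝ) → ℝ) (φ : (Fin m → ℝ) → ℝ)
    (v : Fin (k + m) → ℝ) : ℝ :=
  q (Fin.snoc (fun i => v (Fin.castAdd m i)) (φ (fun j => v (Fin.natAdd k j))))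


lemma measurableSet_posOrth (n : ℕ) : MeasurableSet (posOrth n) := by
  have : posOrth n = Set.pi univ (fun _ => Ioi (0:ℝ)) := by
    ext x; simp [posOrth]
  rw [this]
  exact MeasurableSet.univ_pi (fun _ => measurableSet_Ioi)

lemma isOpen_posOrth (n : ℕ) : IsOpen (posOrth n) := by
  have : posOrth n = Set.pi univ (fun _ => Ioi (0:ℝ)) := by
    ext x; simp [posOrth]
  rw [this]
  exact isOpen_set_pi finite_univ (fun _ _ => isOpen_Ioi)

abbrev hl : Measure ℝ := volume.restrict (Ioi (0:ℝ))

abbrev vol (n : ℕ) : Measure (Fin n → ℝ) := volume.restrict (posOrth n)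

lemma vol_eq_pi (n : ℕ) : vol n = Measure.pi (fun _ : Fin n => hl) := by
  have : posOrth n = Set.pi univ (fun _ => Ioi (0:ℝ)) := by
    ext x; simp [posOrth]
  rw [vol, this, volume_pi, Measure.restrict_pi_pi]

lemma ae_vol_pos (n : ℕ) : ∀ᵐ x ∂(vol n), x ∈ posOrth n :=
  ae_restrict_mem (measurableSet_posOrth n)

def appE (k m : ℕ) : (Fin k → ℝ) × (Fin m → ℝ) ≃ₜ (Fin (k + m) → ℝ) := Fin.appendHomeomorph k m

lemma appE_apply (k m : ℕ) (z : (Fin k → ℝ) × (Fin m → ℝ)) : appE k m z = Fin.append z.1 z.2 := rfl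

lemma append_mem {k m : ℕ} {x : Fin k → ℝ} {y : Fin m → ℝ} (hx : x ∈ posOrth k)
    (hy : y ∈ posOrth m) : Fin.append x y ∈ posOrth (k + m) := by
  intro i
  refine Fin.addCases (fun i => ?_) (fun i => ?_) i
  · simpa using hx i
  · simpa using hy i

lemma snoc_mem {k : ℕ} {x : Fin k → ℝ} {t : ℝ} (hx : x ∈ posOrth k)
    (ht : 0 < t) : (Fin.snoc x t : Fin (k + 1) → ℝ) ∈ posOrth (k + 1) := by
  intro i
  refine Fin.lastCases ?_ (fun i => ?_) i
  · simpa using ht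
  · simpa using hx i

lemma mp_app (k m : ℕ) : MeasurePreserving (appE k m) ((vol k).prod (vol m)) (vol (k + m)) := by
  refine ⟨(appE k m).measurable, ?_⟩
  rw [vol_eq_pi (k + m), vol_eq_pi k, vol_eq_pi m]
  symm
  refine Measure.pi_eq (fun s hs => ?_)
  rw [Measure.map_apply (appE k m).measurable (MeasurableSet.univ_pi hs)]
  have : (appE k m) ⁻¹' (Set.pi univ s) =
      (Set.pi univ fun i => s (Fin.castAdd m i)) ×ˢ (Set.pi univ fun i => s (Fin.natAdd k i)) := by
    ext z
    simp only [mem_preimage, mem_univ_pi, mem_prod, appE_apply]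
    constructor
    · intro h
      exact ⟨fun i => by simpa using h (Fin.castAdd m i), fun i => by simpa using h (Fin.natAdd k i)⟩
    · rintro ⟨h1, h2⟩ i
      refine Fin.addCases (fun i => ?_) (fun i => ?_) i
      · simpa using h1 i
      · simpa using h2 i
  rw [this, Measure.prod_prod, Measure.pi_pi, Measure.pi_pi, Fin.prod_univ_add]

def snE (k : ℕ) : (Fin k → ℝ) × ℝ ≃ₜ (Fin (k + 1) → ℝ) where
  toFun z := Fin.snoc z.1 z.2
  invFun v := (Fin.init v, v (Fin.last k))
  left_inv z := by simp
  right_inv v := by simp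
  continuous_toFun := by
    refine continuous_pi fun i => ?_
    refine Fin.lastCases ?_ (fun i => ?_) i
    · simpa using continuous_snd
    · simp only [Fin.snoc_castSucc]; fun_prop
  continuous_invFun := by
    unfold Fin.init; fun_prop

lemma snE_apply (k : ℕ) (z : (Fin k → ℝ) × ℝ) : snE k z = Fin.snoc z.1 z.2 := rfl

lemma mp_sn (k : ℕ) : MeasurePreserving (snE k) ((vol k).prod hl) (vol (k + 1)) := by
  refine ⟨(snE k).measurable, ?_⟩
  rw [vol_eq_pi (k + 1), vol_eq_pi k]
  symm
  refine Measure.pi_eq (fun s hs => ?_)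
  rw [Measure.map_apply (snE k).measurable (MeasurableSet.univ_pi hs)]
  have : (snE k) ⁻¹' (Set.pi univ s) =
      (Set.pi univ fun i => s (Fin.castSucc i)) ×ˢ (s (Fin.last k)) := by
    ext z
    simp only [mem_preimage, mem_univ_pi, mem_prod, snE_apply]
    constructor
    · intro h
      exact ⟨fun i => by simpa using h (Fin.castSucc i), by simpa using h (Fin.last k)⟩
    · rintro ⟨h1, h2⟩ i
      refine Fin.lastCases ?_ (fun i => ?_) i
      · simpa using h2
      · simpa using h1 i
  rw [this, Measure.prod_prod, Measure.pi_pi, Fin.prod_univ_castSucc]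

/-- weights -/
def wt {n : ℕ} (a : Fin n → ℝ) (x : Fin n → ℝ) : ℝ := ∏ i, x i ^ a i

lemma wt_meas {n : ℕ} (a : Fin n → ℝ) : Measurable (wt a) := by
  unfold wt
  exact Finset.measurable_prod _ (fun i _ => (measurable_pi_apply i).pow_const _)

lemma wt_pos {n : ℕ} (a : Fin n → ℝ) {x : Fin n → ℝ} (hx : x ∈ posOrth n) : 0 < wt a x :=
  Finset.prod_pos (fun i _ => Real.rpow_pos_of_pos (hx i) _)

lemma wt_add {n : ℕ} (a b : Fin n → ℝ) {x : Fin n → ℝ} (hx : x ∈ posOrth n) :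
    wt (fun i => a i + b i) x = wt a x * wt b x := by
  simp only [wt, ← Finset.prod_mul_distrib]
  exact Finset.prod_congr rfl (fun i _ => Real.rpow_add (hx i) _ _)

lemma wt_rpow {n : ℕ} (a : Fin n → ℝ) (s : ℝ) {x : Fin n → ℝ} (hx : x ∈ posOrth n) :
    wt a x ^ s = wt (fun i => s * a i) x := by
  simp only [wt]
  rw [← Real.finsetProd_rpow _ _ (fun i _ => (Real.rpow_pos_of_pos (hx i) _).le)]
  exact Finset.prod_congr rfl (fun i _ => by rw [← Real.rpow_mul (hx i).le, mul_comm])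

lemma wt_zero {n : ℕ} (x : Fin n → ℝ) : wt (fun _ => 0) x = 1 := by simp [wt]

lemma wt_smul {n : ℕ} (a : Fin n → ℝ) {x : Fin n → ℝ} (hx : x ∈ posOrth n) {u : ℝ} (hu : 0 < u) :
    wt a (fun i => u * x i) = u ^ (∑ i, a i) * wt a x := by
  simp only [wt]
  rw [Real.rpow_sum_of_pos hu, ← Finset.prod_mul_distrib]
  exact Finset.prod_congr rfl (fun i _ => Real.mul_rpow hu.le (hx i).le)

lemma wt_append {k m : ℕ} (a : Fin k → ℝ) (b : Fin m → ℝ) (x : Fin k → ℝ) (y : Fin m → ℝ) :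
    wt (Fin.append a b) (Fin.append x y) = wt a x * wt b y := by
  simp [wt, Fin.prod_univ_add]

lemma wt_snoc {k : ℕ} (a : Fin k → ℝ) (b : ℝ) (x : Fin k → ℝ) (y : ℝ) :
    wt (Fin.snoc a b : Fin (k+1) → ℝ) (Fin.snoc x y : Fin (k+1) → ℝ) = wt a x * y ^ b := by
  simp [wt, Fin.prod_univ_castSucc]

def bx {n : ℕ} (b : Fin n → ℝ) : Set (Fin n → ℝ) := {x | ∀ i, 0 < x i ∧ x i ≤ b i}

lemma bx_eq {n : ℕ} (b : Fin n → ℝ) : bx b = Set.pi univ (fun i => Ioc 0 (b i)) := by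
  ext x; simp [bx]

lemma bx_meas {n : ℕ} (b : Fin n → ℝ) : MeasurableSet (bx b) := by
  rw [bx_eq]; exact MeasurableSet.univ_pi (fun _ => measurableSet_Ioc)

lemma bx_sub {n : ℕ} (b : Fin n → ℝ) : bx b ⊆ posOrth n := fun _ hx i => (hx i).1

lemma wt_bx {n : ℕ} (a b : Fin n → ℝ) (ha : ∀ i, -1 < a i) : IntegrableOn (wt a) (bx b) := by
  rw [bx_eq, IntegrableOn, volume_pi, Measure.restrict_pi_pi]
  refine Integrable.fintype_prod (f := fun i t => t ^ a i) (fun i => ?_)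
  rcases le_total 0 (b i) with h | h
  · have := (intervalIntegral.intervalIntegrable_rpow' (a := 0) (b := b i) (ha i)).1
    exact this
  · simp [Ioc_eq_empty_of_le h]

lemma box_int {n : ℕ} {r : ℝ≥0∞} (hr : r = 1 ∨ r = 2 ∨ r = ⊤) {c : Fin n → ℝ} (hc : ∀ i, 0 < c i)
    {f : (Fin n → ℝ) → ℝ} (hf : MemSpaceR n r (fun i => 1 - c i) f) (b : Fin n → ℝ) :
    IntegrableOn f (bx b) := by
  have hle : volume.restrict (bx b) ≤ vol n := Measure.restrict_mono (bx_sub b) le_rfl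
  have hm : AEStronglyMeasurable f (volume.restrict (bx b)) := hf.1.mono_measure hle
  have hmem : ∀ᵐ x ∂(volume.restrict (bx b)), x ∈ bx b := ae_restrict_mem (bx_meas b)
  rcases hr with rfl | rfl | rfl
  · have h := hf.2
    simp only [one_ne_top, if_false, toReal_one, Real.rpow_one, one_mul] at h
    have h' : IntegrableOn _ (bx b) := h.mono_set (bx_sub b)
    refine (h'.mul_const (wt c b)).mono' hm ?_
    filter_upwards [hmem] with x hx
    have e : (∏ i, x i ^ (1 - c i - 1)) * wt c x = 1 := by
      change wt _ x * _ = 1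
      rw [← wt_add _ _ (bx_sub b hx)]
      simp [wt]
    have e2 : wt c x ≤ wt c b := Finset.prod_le_prod
      (fun i _ => (Real.rpow_pos_of_pos (hx i).1 _).le)
      (fun i _ => Real.rpow_le_rpow (hx i).1.le (hx i).2 (hc i).le)
    have e3 : 0 < ∏ i, x i ^ (1 - c i - 1) := wt_pos _ (bx_sub b hx)
    calc ‖f x‖ = |f x| * ((∏ i, x i ^ (1 - c i - 1)) * wt c x) := by rw [e]; simp
      _ ≤ |f x| * ((∏ i, x i ^ (1 - c i - 1)) * wt c b) := by gcongr
      _ = _ := by ring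
  · have h := hf.2
    simp only [ENNReal.ofNat_ne_top, if_false, toReal_ofNat] at h
    have h' : IntegrableOn _ (bx b) := h.mono_set (bx_sub b)
    have h2 := wt_bx (fun i => 2 * c i - 1) b (fun i => by linarith [hc i])
    refine (h'.add h2).mono' hm ?_
    filter_upwards [hmem] with x hx
    have hx' := bx_sub b hx
    set u := wt (fun i => c i - 1 / 2) x with hu
    have hup : 0 < u := wt_pos _ hx'
    set v := wt (fun i => 1 / 2 - c i) x with hv
    have huv : v * u = 1 := by
      rw [hu, hv, ← wt_add _ _ hx']; simp [wt]
    have e1 : (∏ i, x i ^ ((2:ℝ) * (1 - c i) - 1)) = v * v := by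
      change wt _ x = _
      rw [hv, ← wt_add _ _ hx']; congr 1; ext i; ring
    have e2 : wt (fun i => 2 * c i - 1) x = u * u := by
      rw [hu, ← wt_add _ _ hx']; congr 1; ext i; ring
    simp only [Pi.add_apply]
    rw [e1, e2, Real.rpow_two, Real.norm_eq_abs]
    calc |f x| = (|f x| * v) * u := by rw [mul_assoc, huv, mul_one]
      _ ≤ _ := by nlinarith [sq_nonneg (|f x| * v - u), sq_nonneg (|f x| * v), sq_nonneg u]
  · have h := hf.2
    simp only [if_true] at h
    obtain ⟨K, hK⟩ := h
    have h2 := wt_bx (fun i => c i - 1) b (fun i => by linarith [hc i])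
    refine (h2.const_mul K).mono' hm ?_
    filter_upwards [hmem, Measure.absolutelyContinuous_of_le hle hK] with x hx hKx
    have hx' := bx_sub b hx
    have e : wt (fun i => 1 - c i) x * wt (fun i => c i - 1) x = 1 := by
      rw [← wt_add _ _ hx']; simp [wt]
    have p1 := wt_pos (fun i => c i - 1) hx'
    have p2 := wt_pos (fun i => 1 - c i) hx'
    change |f x * wt (fun i => 1 - c i) x| ≤ K at hKx
    rw [abs_mul, abs_of_pos p2] at hKx
    calc ‖f x‖ = (|f x| * wt (fun i => 1 - c i) x) * wt (fun i => c i - 1) x := by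
          rw [mul_assoc, e]; simp
      _ ≤ _ := by gcongr

lemma cost_bound {n : ℕ} {q : (Fin n → ℝ) → ℝ} (hq : IsCostFun n q) :
    ∃ R : ℝ, 0 < R ∧ ∀ x ∈ posOrth n, ∀ i, x i ≤ R * q x := by
  obtain ⟨_, hpos, hhom, hbd⟩ := hq
  obtain ⟨R, hR, hsub⟩ := (hbd 1).exists_pos_norm_le
  refine ⟨R, hR, fun x hx i => ?_⟩
  have hqx := hpos x hx
  have hy : (fun i => (q x)⁻¹ * x i) ∈ posOrth n := fun i => mul_pos (inv_pos.2 hqx) (hx i)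
  have h1 := hsub (fun i => (q x)⁻¹ * x i)
    ⟨hy, by rw [hhom _ (inv_pos.2 hqx) x hx, inv_mul_cancel₀ hqx.ne']⟩
  have h2 := (norm_le_pi_norm (fun i => (q x)⁻¹ * x i) i).trans h1
  rw [Real.norm_of_nonneg (hy i).le] at h2
  simp only at h2
  rwa [inv_mul_le_iff₀ hqx, mul_comm] at h2

lemma mul_mem {n : ℕ} {p x : Fin n → ℝ} (hp : p ∈ posOrth n) (hx : x ∈ posOrth n) :
    (fun i => p i * x i) ∈ posOrth n := fun i => mul_pos (hp i) (hx i)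

lemma kern_meas {n : ℕ} {q : (Fin n → ℝ) → ℝ} (hq : IsCostFun n q) {p : Fin n → ℝ}
    (hp : p ∈ posOrth n) (p0 : ℝ) :
    AEStronglyMeasurable (fun x => max 0 (p0 - q (fun i => p i * x i))) (vol n) := by
  refine ContinuousOn.aestronglyMeasurable ?_ (measurableSet_posOrth n)
  have : ContinuousOn (fun x : Fin n → ℝ => q (fun i => p i * x i)) (posOrth n) :=
    hq.1.continuousOn.comp (by fun_prop) (fun x hx => mul_mem hp hx)
  exact continuousOn_const.sup (continuousOn_const.sub this)

lemma kern_bound {n : ℕ} {q : (Fin n → ℝ) → ℝ} (hq : IsCostFun n q) {R : ℝ} (hR : 0 < R)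
    (hb : ∀ x ∈ posOrth n, ∀ i, x i ≤ R * q x) {p p' x : Fin n → ℝ} (hp : p ∈ posOrth n)
    (hp' : p' ∈ posOrth n) (hpp : ∀ i, p' i ≤ p i)
    (hx : x ∈ posOrth n) {p0 : ℝ} (hp0 : 0 < p0) (f : (Fin n → ℝ) → ℝ) :
    ‖max 0 (p0 - q (fun i => p i * x i)) * f x‖ ≤
      (bx (fun i => R * p0 / p' i)).indicator (fun x => p0 * |f x|) x := by
  have hq0 := hq.2.1 _ (mul_mem hp hx)
  by_cases h : x ∈ bx (fun i => R * p0 / p' i)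
  · rw [indicator_of_mem h, norm_mul, Real.norm_of_nonneg (le_max_left _ _)]
    gcongr
    · exact max_le hp0.le (by linarith)
    · exact le_rfl
  · rw [indicator_of_notMem h]
    have : p0 ≤ q (fun i => p i * x i) := by
      by_contra hlt
      push Not at hlt
      refine h (fun i => ⟨hx i, ?_⟩)
      rw [le_div_iff₀ (hp' i)]
      have h1 := hb _ (mul_mem hp hx) i
      have h2 : R * q (fun i => p i * x i) ≤ R * p0 := by gcongr
      have h3 := mul_le_mul_of_nonneg_right (hpp i) (hx i).le
      linarith
    rw [max_eq_left (by linarith)]; simp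

lemma kern_int {n : ℕ} {q : (Fin n → ℝ) → ℝ} (hq : IsCostFun n q) {f : (Fin n → ℝ) → ℝ}
    (hfm : AEStronglyMeasurable f (vol n)) (hf : ∀ b, IntegrableOn f (bx b))
    {p : Fin n → ℝ} (hp : p ∈ posOrth n) {p0 : ℝ} (hp0 : 0 < p0) :
    Integrable (fun x => max 0 (p0 - q (fun i => p i * x i)) * f x) (vol n) := by
  obtain ⟨R, hR, hb⟩ := cost_bound hq
  have hI : Integrable ((bx (fun i => R * p0 / p i)).indicator (fun x => p0 * |f x|)) (vol n) :=
    Integrable.restrict ((integrable_indicator_iff (bx_meas _)).2 ((hf _).abs.const_mul p0))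
  refine hI.mono' ((kern_meas hq hp p0).mul hfm) ?_
  filter_upwards [ae_vol_pos n] with x hx
  exact kern_bound hq hR hb hp hp (fun _ => le_rfl) hx hp0 f

lemma piq_cont {n : ℕ} {q : (Fin n → ℝ) → ℝ} (hq : IsCostFun n q) {f : (Fin n → ℝ) → ℝ}
    (hfm : AEStronglyMeasurable f (vol n)) (hf : ∀ b, IntegrableOn f (bx b))
    {p0 : ℝ} (hp0 : 0 < p0) :
    ContinuousOn (fun p => Piq n q f p0 p) (posOrth n) := by
  obtain ⟨R, hR, hb⟩ := cost_bound hq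
  intro p hp
  refine ContinuousAt.continuousWithinAt ?_
  set p' : Fin n → ℝ := fun i => p i / 2 with hp'
  have hp'm : p' ∈ posOrth n := fun i => half_pos (hp i)
  have hev : ∀ᶠ s in nhds p, ∀ i, p' i < s i := by
    rw [Filter.eventually_all]
    intro i
    exact (continuous_apply i).continuousAt.eventually (lt_mem_nhds (half_lt_self (hp i)))
  have hI : Integrable ((bx (fun i => R * p0 / p' i)).indicator (fun x => p0 * |f x|)) (vol n) :=
    Integrable.restrict ((integrable_indicator_iff (bx_meas _)).2 ((hf _).abs.const_mul p0))
  unfold Piq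
  refine continuousAt_of_dominated ?_ ?_ hI ?_
  · filter_upwards [hev] with s hs
    exact (kern_meas hq (fun i => (hp'm i).trans (hs i)) p0).mul hfm
  · filter_upwards [hev] with s hs
    filter_upwards [ae_vol_pos n] with x hx
    exact kern_bound hq hR hb (fun i => (hp'm i).trans (hs i)) hp'm (fun i => (hs i).le) hx hp0 f
  · filter_upwards [ae_vol_pos n] with x hx
    have hc : ContinuousAt q (fun i => p i * x i) :=
      hq.1.continuousOn.continuousAt ((isOpen_posOrth n).mem_nhds (mul_mem hp hx))
    have : ContinuousAt (fun s : Fin n → ℝ => q (fun i => s i * x i)) p :=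
      ContinuousAt.comp (f := fun s : Fin n → ℝ => (fun i => s i * x i)) (g := q) hc
        (Continuous.continuousAt (by fun_prop))
    exact (continuousAt_const.sup (continuousAt_const.sub this)).mul continuousAt_const

lemma piq_zero_of_dense {n : ℕ} {q : (Fin n → ℝ) → ℝ} (hq : IsCostFun n q) {f : (Fin n → ℝ) → ℝ}
    (hfm : AEStronglyMeasurable f (vol n)) (hf : ∀ b, IntegrableOn f (bx b))
    {p0 : ℝ} (hp0 : 0 < p0) {S : Set (posOrth n)} (hS : Dense S)
    (h : ∀ s ∈ S, Piq n q f p0 s = 0) : ∀ p ∈ posOrth n, Piq n q f p0 p = 0 := by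
  have hc := (piq_cont hq hfm hf hp0).domRestrict
  have := Continuous.ext_on hS hc (continuous_const (y := (0:ℝ))) (fun s hs => h s hs)
  intro p hp
  exact congrFun this ⟨p, hp⟩

lemma scale_vol {m : ℕ} {u : ℝ} (hu : 0 < u) {G : (Fin m → ℝ) → ℝ≥0∞} (hG : Measurable G) :
    ∫⁻ y, G (fun i => u * y i) ∂(vol m) = ENNReal.ofReal (u ^ (-(m:ℝ))) * ∫⁻ y, G y ∂(vol m) := by
  have h := Measure.map_addHaar_smul (volume : Measure (Fin m → ℝ)) hu.ne'
  have hP := measurableSet_posOrth m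
  rw [← lintegral_indicator hP, ← lintegral_indicator hP]
  have e : ∀ y, (posOrth m).indicator (fun y => G (fun i => u * y i)) y =
      (posOrth m).indicator G (u • y) := by
    intro y
    have : u • y ∈ posOrth m ↔ y ∈ posOrth m := by
      simp only [posOrth, mem_ofPred_eq, Pi.smul_apply, smul_eq_mul]
      exact forall_congr' fun i => mul_pos_iff_of_pos_left hu
    by_cases hy : y ∈ posOrth m
    · rw [indicator_of_mem hy, indicator_of_mem (this.2 hy)]; rfl
    · rw [indicator_of_notMem hy, indicator_of_notMem (fun h => hy (this.1 h))]
  simp_rw [e]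
  rw [← lintegral_map (f := (posOrth m).indicator G) (hG.indicator hP) (measurable_const_smul u), h,
    lintegral_smul_measure]
  congr 1
  congr 1
  rw [abs_of_pos (by positivity), Real.rpow_neg hu.le]
  simp

lemma scale_hl {a : ℝ} (ha : 0 < a) {G : ℝ → ℝ≥0∞} (hG : Measurable G) :
    ∫⁻ t, G (a * t) ∂hl = ENNReal.ofReal a⁻¹ * ∫⁻ t, G t ∂hl := by
  have h := Real.map_volume_mul_left ha.ne'
  have hP : MeasurableSet (Ioi (0:ℝ)) := measurableSet_Ioi
  rw [← lintegral_indicator hP, ← lintegral_indicator hP]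
  have e : ∀ y, (Ioi (0:ℝ)).indicator (fun y => G (a * y)) y =
      (Ioi (0:ℝ)).indicator G (a * y) := by
    intro y
    have : a * y ∈ Ioi (0:ℝ) ↔ y ∈ Ioi (0:ℝ) := mul_pos_iff_of_pos_left ha
    by_cases hy : y ∈ Ioi (0:ℝ)
    · rw [indicator_of_mem hy, indicator_of_mem (this.2 hy)]
    · rw [indicator_of_notMem hy, indicator_of_notMem (fun h => hy (this.1 h))]
  simp_rw [e]
  rw [← lintegral_map (f := (Ioi (0:ℝ)).indicator G) (hG.indicator hP) (measurable_const_mul a), h,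
    lintegral_smul_measure, abs_of_pos (by positivity)]
  rfl

def nu {m : ℕ} (d : Fin m → ℝ) : Measure (Fin m → ℝ) :=
  (vol m).withDensity (fun y => ENNReal.ofReal (wt (fun i => d i - 1) y))

instance {m : ℕ} (d : Fin m → ℝ) : SFinite (nu d) := by unfold nu; infer_instance

lemma ae_nu {m : ℕ} (d : Fin m → ℝ) {p : (Fin m → ℝ) → Prop} (h : ∀ᵐ y ∂(vol m), p y) :
    ∀ᵐ y ∂(nu d), p y := (withDensity_absolutelyContinuous _ _).ae_le h

lemma lint_nu {m : ℕ} (d : Fin m → ℝ) {G : (Fin m → ℝ) → ℝ≥0∞} (hG : Measurable G) :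
    ∫⁻ y, G y ∂(nu d) = ∫⁻ y, ENNReal.ofReal (wt (fun i => d i - 1) y) * G y ∂(vol m) := by
  rw [nu, lintegral_withDensity_eq_lintegral_mul _ (wt_meas _).ennreal_ofReal hG]
  rfl

lemma scale_nu {m : ℕ} (d : Fin m → ℝ) {u : ℝ} (hu : 0 < u) {G : (Fin m → ℝ) → ℝ≥0∞}
    (hG : Measurable G) :
    ∫⁻ y, G (fun i => u * y i) ∂(nu d) =
      ENNReal.ofReal (u ^ (-(∑ i, d i))) * ∫⁻ y, G y ∂(nu d) := by
  rw [lint_nu d hG, lint_nu d (G := fun y => G (fun i => u * y i)) (hG.comp (by fun_prop))]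
  have hw := wt_meas (fun i => d i - 1)
  have e : ∀ᵐ y ∂(vol m), ENNReal.ofReal (wt (fun i => d i - 1) y) * G (fun i => u * y i) =
      ENNReal.ofReal (u ^ ((m:ℝ) - ∑ i, d i)) *
        (fun z => ENNReal.ofReal (wt (fun i => d i - 1) z) * G z) (fun i => u * y i) := by
    filter_upwards [ae_vol_pos m] with y hy
    rw [wt_smul _ hy hu, ← mul_assoc, ← ENNReal.ofReal_mul (by positivity), ← mul_assoc,
      ← Real.rpow_add hu]
    simp
  rw [lintegral_congr_ae e, lintegral_const_mul _ (by fun_prop), scale_vol hu (G := fun z => ENNReal.ofReal (wt (fun i => d i - 1) z) * G z) (by fun_prop),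
    ← mul_assoc, ← ENNReal.ofReal_mul (by positivity), ← Real.rpow_add hu]
  congr 3; ring

structure Core {m : ℕ} (ψ : (Fin m → ℝ) → ℝ) : Prop where
  meas : Measurable ψ
  pos : ∀ x ∈ posOrth m, 0 < ψ x
  hom : ∀ lam : ℝ, 0 < lam → ∀ x ∈ posOrth m, ψ (fun i => lam * x i) = lam * ψ x
  bd : ∃ R : ℝ, 0 < R ∧ ∀ x ∈ posOrth m, ∀ i, x i ≤ R * ψ x

def AA {m : ℕ} (ψ : (Fin m → ℝ) → ℝ) : Set (Fin m → ℝ) := {y | y ∈ posOrth m ∧ ψ y ≤ 1}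

lemma AA_meas {m : ℕ} {ψ : (Fin m → ℝ) → ℝ} (h : Core ψ) : MeasurableSet (AA ψ) :=
  (measurableSet_posOrth m).inter (measurableSet_le h.meas measurable_const)

lemma AA_fin {m : ℕ} {ψ : (Fin m → ℝ) → ℝ} (h : Core ψ) {d : Fin m → ℝ} (hd : ∀ i, 0 < d i) :
    nu d (AA ψ) < ⊤ := by
  obtain ⟨R, hR, hb⟩ := h.bd
  have hsub : AA ψ ⊆ bx (fun _ => R) := by
    intro y hy i
    refine ⟨hy.1 i, (hb y hy.1 i).trans ?_⟩
    nlinarith [hy.2]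
  refine (measure_mono hsub).trans_lt ?_
  have h1 := wt_bx (fun i => d i - 1) (fun _ => R) (fun i => by linarith [hd i])
  rw [nu, withDensity_apply _ (bx_meas _), Measure.restrict_restrict (bx_meas _),
    inter_eq_left.2 (bx_sub _)]
  exact h1.lintegral_lt_top

def TT {m : ℕ} (ψ : (Fin m → ℝ) → ℝ) (z : ℝ × (Fin m → ℝ)) : Fin m → ℝ :=
  fun i => z.1 / ψ z.2 * z.2 i

lemma TT_meas {m : ℕ} {ψ : (Fin m → ℝ) → ℝ} (h : Core ψ) : Measurable (TT ψ) := by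
  have := h.meas
  unfold TT
  fun_prop

lemma TT_mem {m : ℕ} {ψ : (Fin m → ℝ) → ℝ} (h : Core ψ) {t : ℝ} (ht : 0 < t) {y : Fin m → ℝ}
    (hy : y ∈ posOrth m) : TT ψ (t, y) ∈ posOrth m :=
  fun i => mul_pos (div_pos ht (h.pos y hy)) (hy i)

lemma TT_psi {m : ℕ} {ψ : (Fin m → ℝ) → ℝ} (h : Core ψ) {t : ℝ} (ht : 0 < t) {y : Fin m → ℝ}
    (hy : y ∈ posOrth m) : ψ (TT ψ (t, y)) = t := by
  have := h.pos y hy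
  unfold TT
  rw [h.hom _ (div_pos ht this) y hy]
  field_simp

lemma inner_u {D a : ℝ} (hD : 0 < D) (ha : 0 < a) :
    ∫⁻ u, (Ici a).indicator (fun u => ENNReal.ofReal (a ^ D * u ^ (-D - 1))) u ∂hl
      = ENNReal.ofReal (1 / D) := by
  rw [lintegral_indicator measurableSet_Ici, Measure.restrict_restrict measurableSet_Ici,
    inter_eq_left.2 (show Ici a ⊆ Ioi 0 from fun x hx => lt_of_lt_of_le ha hx),
    ← restrict_Ioi_eq_restrict_Ici]
  rw [← ofReal_integral_eq_lintegral_ofReal]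
  · rw [integral_const_mul, integral_Ioi_rpow_of_lt (by linarith) ha]
    congr 1
    have : -D - 1 + 1 = -D := by ring
    rw [this, Real.rpow_neg ha.le]
    have := Real.rpow_pos_of_pos ha D
    field_simp
  · exact (integrableOn_Ioi_rpow_of_lt (by linarith) ha).const_mul _
  · filter_upwards [ae_restrict_mem measurableSet_Ioi] with u hu
    have : 0 < u := ha.trans hu
    simp only [Pi.zero_apply]
    positivity

lemma push {m : ℕ} {ψ : (Fin m → ℝ) → ℝ} (hψ : Core ψ) (d : Fin m → ℝ) {D : ℝ}
    (hDd : D = ∑ i, d i) (hD : 0 < D) {h : (Fin m → ℝ) → ℝ≥0∞} (hh : Measurable h) :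
    ∫⁻ t, ENNReal.ofReal (t ^ (D - 1)) * ∫⁻ y in AA ψ, h (TT ψ (t, y)) ∂(nu d) ∂hl =
      ENNReal.ofReal (1 / D) * ∫⁻ y, h y ∂(nu d) := by
  have hψm := hψ.meas
  have hT := TT_meas hψ
  have hA := AA_meas hψ
  have hmemA : ∀ᵐ y ∂((nu d).restrict (AA ψ)), y ∈ AA ψ := ae_restrict_mem hA
  have hsm : Measurable (fun z : ℝ × (Fin m → ℝ) => (fun i => z.1 * z.2 i)) := by fun_prop
  calc _ = ∫⁻ t, ∫⁻ y in AA ψ, ENNReal.ofReal (t ^ (D - 1)) * h (TT ψ (t, y)) ∂(nu d) ∂hl := by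
        refine lintegral_congr fun t => ?_
        rw [lintegral_const_mul]
        exact hh.comp (hT.comp (by fun_prop))
    _ = ∫⁻ y in AA ψ, ∫⁻ t, ENNReal.ofReal (t ^ (D - 1)) * h (TT ψ (t, y)) ∂hl ∂(nu d) := by
        refine lintegral_lintegral_swap (Measurable.aemeasurable ?_)
        have : Measurable fun z : ℝ × (Fin m → ℝ) => h (TT ψ z) := hh.comp hT
        simp only [Function.uncurry_def]
        exact Measurable.mul (by fun_prop) this
    _ = ∫⁻ y in AA ψ, ∫⁻ u, ENNReal.ofReal (ψ y ^ D * u ^ (D - 1)) * h (fun i => u * y i) ∂hl ∂(nu d) := by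
        refine lintegral_congr_ae ?_
        filter_upwards [hmemA] with y hy
        have hp := hψ.pos y hy.1
        have hm1 : Measurable fun u : ℝ => h (fun i => u * y i) := hh.comp (by fun_prop)
        have hm2 : Measurable (fun u => ENNReal.ofReal ((ψ y * u) ^ (D - 1)) * h (fun i => u * y i)) :=
          Measurable.mul (by fun_prop) hm1
        have := scale_hl (inv_pos.2 hp)
          (G := fun u => ENNReal.ofReal ((ψ y * u) ^ (D - 1)) * h (fun i => u * y i))
          hm2
        have e : ∀ t, ENNReal.ofReal (t ^ (D - 1)) * h (TT ψ (t, y)) =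
          (fun u => ENNReal.ofReal ((ψ y * u) ^ (D - 1)) * h (fun i => u * y i)) ((ψ y)⁻¹ * t) := by
          intro t
          simp only
          congr 2
          · rw [mul_inv_cancel_left₀ hp.ne']
          · ext i; simp only [TT]; rw [div_eq_inv_mul]
        simp_rw [e]
        rw [this, inv_inv, ← lintegral_const_mul _ hm2]
        refine lintegral_congr_ae ?_
        filter_upwards [ae_restrict_mem measurableSet_Ioi] with u hu
        have hu : 0 < u := hu
        rw [← mul_assoc, ← ENNReal.ofReal_mul hp.le, Real.mul_rpow hp.le hu.le, ← mul_assoc]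
        congr 3
        rw [← Real.rpow_one_add' hp.le (by linarith)]
        congr 1; ring
    _ = ∫⁻ u, ∫⁻ y in AA ψ, ENNReal.ofReal (ψ y ^ D * u ^ (D - 1)) * h (fun i => u * y i) ∂(nu d) ∂hl := by
        refine lintegral_lintegral_swap (Measurable.aemeasurable ?_)
        simp only [Function.uncurry_def]
        refine Measurable.mul (by fun_prop) ?_
        exact hh.comp (hsm.comp measurable_swap)
    _ = ∫⁻ u, ∫⁻ z, (Ici (ψ z)).indicator
          (fun u => ENNReal.ofReal (ψ z ^ D * u ^ (-D - 1))) u * h z ∂(nu d) ∂hl := by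
        refine lintegral_congr_ae ?_
        filter_upwards [ae_restrict_mem measurableSet_Ioi] with u hu
        have hu : 0 < u := hu
        have hS : MeasurableSet {z | ψ z ≤ u} := measurableSet_le hψm measurable_const
        have hG : Measurable ({z | ψ z ≤ u}.indicator
          (fun z => ENNReal.ofReal ((ψ z / u) ^ D * u ^ (D - 1)) * h z)) :=
          Measurable.indicator (by fun_prop) hS
        have sc := scale_nu d hu hG
        rw [← hDd] at sc
        rw [← lintegral_indicator hA]
        refine Eq.trans (Eq.trans (lintegral_congr_ae ?_) sc) ?_
        · filter_upwards [ae_nu d (ae_vol_pos m)] with y hy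
          have hm : (fun i => u * y i) ∈ {z | ψ z ≤ u} ↔ y ∈ AA ψ := by
            simp only [mem_ofPred_eq, AA, hy, true_and]
            rw [hψ.hom u hu y hy]
            exact mul_le_iff_le_one_right hu
          by_cases hyA : y ∈ AA ψ
          · rw [indicator_of_mem hyA, indicator_of_mem (hm.2 hyA), hψ.hom u hu y hy]
            congr 4
            field_simp
          · rw [indicator_of_notMem hyA, indicator_of_notMem (fun h => hyA (hm.1 h))]
        · rw [← lintegral_const_mul _ hG]
          refine lintegral_congr_ae ?_
          filter_upwards [ae_nu d (ae_vol_pos m)] with z hz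
          have hp := hψ.pos z hz
          by_cases hzu : ψ z ≤ u
          · rw [indicator_of_mem (show z ∈ {z | ψ z ≤ u} from hzu),
              indicator_of_mem (show u ∈ Ici (ψ z) from hzu), ← mul_assoc,
              ← ENNReal.ofReal_mul (by positivity)]
            congr 2
            rw [Real.div_rpow hp.le hu.le, Real.rpow_neg hu.le, Real.rpow_sub hu, Real.rpow_sub hu,
              Real.rpow_neg hu.le]
            field_simp
          · rw [indicator_of_notMem (show z ∉ {z | ψ z ≤ u} from hzu),
              indicator_of_notMem (show u ∉ Ici (ψ z) from hzu)]
            simp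
    _ = ∫⁻ z, ∫⁻ u, (Ici (ψ z)).indicator
          (fun u => ENNReal.ofReal (ψ z ^ D * u ^ (-D - 1))) u * h z ∂hl ∂(nu d) := by
        refine lintegral_lintegral_swap (Measurable.aemeasurable ?_)
        simp only [Function.uncurry_def]
        refine Measurable.mul ?_ (hh.comp measurable_snd)
        have : (fun a : ℝ × (Fin m → ℝ) => (Ici (ψ a.2)).indicator
            (fun u => ENNReal.ofReal (ψ a.2 ^ D * u ^ (-D - 1))) a.1) =
            {a : ℝ × (Fin m → ℝ) | ψ a.2 ≤ a.1}.indicator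
              (fun a => ENNReal.ofReal (ψ a.2 ^ D * a.1 ^ (-D - 1))) := by
          ext a; simp [indicator]
        rw [this]
        exact Measurable.indicator (by fun_prop) (measurableSet_le (by fun_prop) (by fun_prop))
    _ = ∫⁻ z, ENNReal.ofReal (1 / D) * h z ∂(nu d) := by
        refine lintegral_congr_ae ?_
        filter_upwards [ae_nu d (ae_vol_pos m)] with z hz
        rw [lintegral_mul_const, inner_u hD (hψ.pos z hz)]
        exact Measurable.indicator (by fun_prop) measurableSet_Ici
    _ = _ := lintegral_const_mul _ hh

lemma map_push {m : ℕ} {ψ : (Fin m → ℝ) → ℝ} (hψ : Core ψ) (d : Fin m → ℝ) {D : ℝ}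
    (hDd : D = ∑ i, d i) (hD : 0 < D) :
    Measure.map (TT ψ) ((hl.withDensity (fun t => ENNReal.ofReal (t ^ (D - 1)))).prod
      ((nu d).restrict (AA ψ))) = ENNReal.ofReal (1 / D) • nu d := by
  refine Measure.ext_of_lintegral _ (fun h hh => ?_)
  have hT := TT_meas hψ
  have h1 : Measurable fun z => h (TT ψ z) := hh.comp hT
  rw [lintegral_map hh hT, lintegral_smul_measure, lintegral_prod _ h1.aemeasurable,
    lintegral_withDensity_eq_lintegral_mul _ (by fun_prop) h1.lintegral_prod_right']
  exact push hψ d hDd hD hh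

lemma ae_push {m : ℕ} {ψ : (Fin m → ℝ) → ℝ} (hψ : Core ψ) (d : Fin m → ℝ) {D : ℝ}
    (hDd : D = ∑ i, d i) (hD : 0 < D) {p : (Fin m → ℝ) → Prop} (hp : ∀ᵐ y ∂(vol m), p y) :
    ∀ᵐ t ∂hl, ∀ᵐ y ∂((nu d).restrict (AA ψ)), p (TT ψ (t, y)) := by
  have h1 : ∀ᵐ y ∂(ENNReal.ofReal (1 / D) • nu d), p y := Measure.ae_smul_measure (ae_nu d hp) _
  rw [← map_push hψ d hDd hD] at h1
  have h2 := Measure.ae_ae_of_ae_prod (ae_of_ae_map (TT_meas hψ).aemeasurable h1)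
  refine (withDensity_absolutelyContinuous' (by fun_prop) ?_).ae_le h2
  filter_upwards [ae_restrict_mem measurableSet_Ioi] with t ht
  have : 0 < t ^ (D - 1) := Real.rpow_pos_of_pos ht _
  simpa using this

lemma int_push {m : ℕ} {ψ : (Fin m → ℝ) → ℝ} (hψ : Core ψ) (d : Fin m → ℝ) {D : ℝ}
    (hDd : D = ∑ i, d i) (hD : 0 < D) {h : (Fin m → ℝ) → ℝ} (hh : Integrable h (vol m)) :
    ∫ t, t ^ (D - 1) * ∫ y in AA ψ, h (TT ψ (t, y)) * wt (fun i => 1 - d i) (TT ψ (t, y)) ∂(nu d) ∂hl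
      = D⁻¹ * ∫ y, h y ∂(vol m) := by
  set H : (Fin m → ℝ) → ℝ := fun y => h y * wt (fun i => 1 - d i) y with hH
  have hwm := wt_meas (fun i => d i - 1)
  have key : ∀ᵐ y ∂(vol m), (ENNReal.ofReal (wt (fun i => d i - 1) y)).toReal • H y = h y := by
    filter_upwards [ae_vol_pos m] with y hy
    rw [ENNReal.toReal_ofReal (wt_pos _ hy).le, smul_eq_mul, hH]
    simp only
    rw [mul_left_comm, ← wt_add _ _ hy]
    simp [wt]
  have hHi : Integrable H (nu d) := by
    rw [nu, integrable_withDensity_iff_integrable_smul' (by fun_prop) (by simp)]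
    exact hh.congr (by filter_upwards [key] with y hy using hy.symm)
  have hHint : ∫ y, H y ∂(nu d) = ∫ y, h y ∂(vol m) := by
    rw [nu, integral_withDensity_eq_integral_toReal_smul (by fun_prop) (by simp)]
    exact integral_congr_ae key
  have hmp := map_push hψ d hDd hD
  have hHi2 : Integrable H (Measure.map (TT ψ) ((hl.withDensity
      (fun t => ENNReal.ofReal (t ^ (D - 1)))).prod ((nu d).restrict (AA ψ)))) := by
    rw [hmp]; exact hHi.smul_measure ENNReal.ofReal_ne_top
  have hHi3 : Integrable (fun z => H (TT ψ z)) _ := hHi2.comp_measurable (TT_meas hψ)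
  have e1 : ∫ y, H y ∂(ENNReal.ofReal (1 / D) • nu d) = D⁻¹ * ∫ y, h y ∂(vol m) := by
    rw [integral_smul_measure, hHint, ENNReal.toReal_ofReal (by positivity)]; simp
  rw [← e1, ← hmp, integral_map (TT_meas hψ).aemeasurable hHi2.aestronglyMeasurable,
    integral_prod _ hHi3, integral_withDensity_eq_integral_toReal_smul (by fun_prop) (by simp)]
  refine integral_congr_ae ?_
  filter_upwards [ae_restrict_mem measurableSet_Ioi] with t ht
  have : 0 < t ^ (D - 1) := Real.rpow_pos_of_pos ht _
  rw [ENNReal.toReal_ofReal this.le, smul_eq_mul]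

lemma comp_snoc' {k : ℕ} (g : ℝ → ℝ) (c : Fin k → ℝ) (D : ℝ) :
    (fun i => g ((Fin.snoc c D : Fin (k+1) → ℝ) i)) = (Fin.snoc (fun i => g (c i)) (g D) : Fin (k+1) → ℝ) := by
  ext i
  refine Fin.lastCases ?_ (fun i => ?_) i <;> simp

lemma comp_append' {k m : ℕ} (g : ℝ → ℝ) (c : Fin k → ℝ) (d : Fin m → ℝ) :
    (fun i => g (Fin.append c d i)) = Fin.append (fun i => g (c i)) (fun i => g (d i)) := by
  ext i
  refine Fin.addCases (fun i => ?_) (fun i => ?_) i <;> simp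

lemma nested_append {k m : ℕ} (q : (Fin (k + 1) → ℝ) → ℝ) (φ : (Fin m → ℝ) → ℝ)
    (x : Fin k → ℝ) (y : Fin m → ℝ) :
    nestedCost k m q φ (Fin.append x y) = q (Fin.snoc x (φ y)) := by
  simp [nestedCost]

lemma nested_cost {k m : ℕ} {q : (Fin (k + 1) → ℝ) → ℝ} (hq : IsCostFun (k + 1) q)
    {φ : (Fin m → ℝ) → ℝ} (hφ : IsCostFun m φ) : IsCostFun (k + m) (nestedCost k m q φ) := by
  obtain ⟨R, hR, hb⟩ := cost_bound hq
  obtain ⟨R', hR', hb'⟩ := cost_bound hφ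
  have hin : ∀ v ∈ posOrth (k + m), (fun j => v (Fin.natAdd k j)) ∈ posOrth m := fun v hv j => hv _
  have hin1 : ∀ v ∈ posOrth (k + m), (fun j => v (Fin.castAdd m j)) ∈ posOrth k := fun v hv j => hv _
  have hsn : ∀ v ∈ posOrth (k + m), (Fin.snoc (fun i => v (Fin.castAdd m i))
      (φ (fun j => v (Fin.natAdd k j))) : Fin (k+1) → ℝ) ∈ posOrth (k + 1) := fun v hv =>
    snoc_mem (hin1 v hv) (hφ.2.1 _ (hin v hv))
  refine ⟨?_, ?_, ?_, ?_⟩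
  · refine ContDiffOn.comp (g := q) hq.1 ?_ hsn
    rw [contDiffOn_pi]
    intro i
    refine Fin.lastCases ?_ (fun i => ?_) i
    · simp only [Fin.snoc_last]
      refine ContDiffOn.comp (g := φ) hφ.1 ?_ hin
      exact ContDiff.contDiffOn (by fun_prop)
    · simp only [Fin.snoc_castSucc]
      exact ContDiff.contDiffOn (by fun_prop)
  · exact fun v hv => hq.2.1 _ (hsn v hv)
  · intro lam hl v hv
    unfold nestedCost
    rw [← hq.2.2.1 lam hl _ (hsn v hv), comp_snoc' (fun s => lam * s), hφ.2.2.1 lam hl _ (hin v hv)]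
  · intro t
    rw [isBounded_iff_forall_norm_le]
    refine ⟨max (R * |t|) (R' * (R * |t|)), ?_⟩
    rintro v ⟨hv, rfl⟩
    have h0 := hq.2.1 _ (hsn v hv)
    have hs := hb _ (hsn v hv)
    change 0 < nestedCost k m q φ v at h0
    have hs : ∀ i, (Fin.snoc (fun i => v (Fin.castAdd m i))
      (φ (fun j => v (Fin.natAdd k j))) : Fin (k+1) → ℝ) i ≤ R * nestedCost k m q φ v := hs
    rw [abs_of_pos h0]
    rw [pi_norm_le_iff_of_nonneg (le_max_of_le_left (by positivity))]
    intro i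
    rw [Real.norm_of_nonneg (hv i).le]
    refine Fin.addCases (fun i => ?_) (fun i => ?_) i
    · refine le_max_of_le_left ?_
      simpa using hs (Fin.castSucc i)
    · refine le_max_of_le_right ?_
      have h1 := hs (Fin.last k)
      simp only [Fin.snoc_last] at h1
      exact (hb' _ (hin v hv) i).trans (by gcongr)

def FF {k m : ℕ} (ψ : (Fin m → ℝ) → ℝ) (d : Fin m → ℝ) (D : ℝ)
    (f : (Fin (k + m) → ℝ) → ℝ) (x : Fin k → ℝ) (t : ℝ) : ℝ :=
  t ^ (D - 1) * ∫ y in AA ψ, f (Fin.append x (TT ψ (t, y))) * wt (fun i => 1 - d i) (TT ψ (t, y)) ∂(nu d)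

lemma app_meas (k m : ℕ) : Measurable (fun z : (Fin k → ℝ) × (Fin m → ℝ) => Fin.append z.1 z.2) :=
  (appE k m).measurable

lemma FF_meas {k m : ℕ} {ψ : (Fin m → ℝ) → ℝ} (hψ : Core ψ) (d : Fin m → ℝ) (D : ℝ)
    {f : (Fin (k + m) → ℝ) → ℝ} (hf : Measurable f) :
    Measurable (fun z : (Fin k → ℝ) × ℝ => FF ψ d D f z.1 z.2) := by
  unfold FF
  refine Measurable.mul (by fun_prop) ?_
  have hT := TT_meas hψ
  have h1 : Measurable fun z : ((Fin k → ℝ) × ℝ) × (Fin m → ℝ) => TT ψ (z.1.2, z.2) :=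
    hT.comp (by fun_prop)
  have h2 : Measurable fun z : ((Fin k → ℝ) × ℝ) × (Fin m → ℝ) =>
      f (Fin.append z.1.1 (TT ψ (z.1.2, z.2))) * wt (fun i => 1 - d i) (TT ψ (z.1.2, z.2)) :=
    (hf.comp ((app_meas k m).comp (by fun_prop :
      Measurable fun z : ((Fin k → ℝ) × ℝ) × (Fin m → ℝ) => (z.1.1, TT ψ (z.1.2, z.2))))).mul
      ((wt_meas _).comp h1)
  exact (h2.stronglyMeasurable.integral_prod_right' (ν := (nu d).restrict (AA ψ))).measurable

lemma jensen {α : Type*} [MeasurableSpace α] (ρ : Measure α) (hρ : ρ univ < ⊤) {r : ℝ≥0∞}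
    (hr1 : 1 ≤ r) (hr : r ≠ ⊤) : ∃ C : ℝ≥0∞, C ≠ ⊤ ∧ ∀ g : α → ℝ, Measurable g →
      ‖∫ y, g y ∂ρ‖ₑ ^ r.toReal ≤ C * ∫⁻ y, ‖g y‖ₑ ^ r.toReal ∂ρ := by
  have hs : 1 ≤ r.toReal := by
    rw [← ENNReal.toReal_one]; exact ENNReal.toReal_mono hr hr1
  have hs0 : 0 < r.toReal := by linarith
  refine ⟨(ρ univ ^ (1 / (1:ℝ≥0∞).toReal - 1 / r.toReal)) ^ r.toReal, ?_, fun g hg => ?_⟩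
  · refine ENNReal.rpow_ne_top_of_nonneg hs0.le (ENNReal.rpow_ne_top_of_nonneg ?_ hρ.ne)
    simp only [toReal_one, div_one, one_div, sub_nonneg]
    exact inv_le_one_of_one_le₀ hs
  · have h1 := eLpNorm_le_eLpNorm_mul_rpow_measure_univ hr1 hg.aestronglyMeasurable (μ := ρ)
    have h2 : ‖∫ y, g y ∂ρ‖ₑ ≤ eLpNorm g 1 ρ := by
      rw [eLpNorm_one_eq_lintegral_enorm]; exact enorm_integral_le_lintegral_enorm _
    calc _ ≤ (eLpNorm g r ρ * ρ univ ^ (1 / (1:ℝ≥0∞).toReal - 1 / r.toReal)) ^ r.toReal :=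
          ENNReal.rpow_le_rpow (h2.trans h1) hs0.le
      _ = _ := by
          rw [ENNReal.mul_rpow_of_nonneg _ _ hs0.le,
            eLpNorm_eq_lintegral_rpow_enorm_toReal (by positivity) hr, ← ENNReal.rpow_mul,
            one_div_mul_cancel hs0.ne', ENNReal.rpow_one, mul_comm]

lemma mem_iff {n : ℕ} {r : ℝ≥0∞} (hr : r ≠ ⊤) (a : Fin n → ℝ) {f : (Fin n → ℝ) → ℝ}
    (hf : Measurable f) : MemSpaceR n r a f ↔
      ∫⁻ x, ‖f x‖ₑ ^ r.toReal * ENNReal.ofReal (wt (fun i => r.toReal * a i - 1) x) ∂(vol n) < ⊤ := by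
  have hw := wt_meas (fun i => r.toReal * a i - 1)
  unfold MemSpaceR
  rw [if_neg hr]
  have hm : Measurable (fun x => |f x| ^ r.toReal * wt (fun i => r.toReal * a i - 1) x) := by
    fun_prop
  have e : ∫⁻ x, ‖|f x| ^ r.toReal * wt (fun i => r.toReal * a i - 1) x‖ₑ ∂(vol n) =
      ∫⁻ x, ‖f x‖ₑ ^ r.toReal * ENNReal.ofReal (wt (fun i => r.toReal * a i - 1) x) ∂(vol n) := by
    refine lintegral_congr_ae ?_
    filter_upwards [ae_vol_pos n] with x hx
    rw [enorm_mul, Real.enorm_of_nonneg (wt_pos _ hx).le, Real.enorm_of_nonneg (by positivity),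
      ← ENNReal.ofReal_rpow_of_nonneg (abs_nonneg _) ENNReal.toReal_nonneg, Real.enorm_eq_ofReal_abs]
  rw [← e]
  constructor
  · intro h
    exact h.2.2
  · intro h
    exact ⟨hf.aestronglyMeasurable, hm.aestronglyMeasurable, h⟩

lemma psi_wt {m : ℕ} {ψ : (Fin m → ℝ) → ℝ} (hψ : Core ψ) {d : Fin m → ℝ} (hd : ∀ i, 0 < d i) {D : ℝ}
    (hDd : D = ∑ i, d i) : ∃ R : ℝ, 0 < R ∧ ∀ z ∈ posOrth m,
      ψ z ^ (-D) ≤ R * wt (fun i => - d i) z := by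
  obtain ⟨R, hR, hb⟩ := hψ.bd
  refine ⟨R ^ D, by positivity, fun z hz => ?_⟩
  have hp := hψ.pos z hz
  have h1 : wt d z ≤ (R * ψ z) ^ D := by
    rw [hDd, Real.rpow_sum_of_pos (by positivity)]
    exact Finset.prod_le_prod (fun i _ => (Real.rpow_pos_of_pos (hz i) _).le)
      (fun i _ => Real.rpow_le_rpow (hz i).le (hb z hz i) (hd i).le)
  rw [Real.mul_rpow hR.le hp.le] at h1
  have h2 : wt d z * wt (fun i => - d i) z = 1 := by
    rw [← wt_add _ _ hz]; simp [wt]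
  have h3 := wt_pos (fun i => - d i) hz
  have h4 : ψ z ^ D * ψ z ^ (-D) = 1 := by
    rw [← Real.rpow_add hp]; simp
  have h5 := Real.rpow_pos_of_pos hp (-D)
  have h6 := mul_le_mul_of_nonneg_right h1 h3.le
  have h7 := mul_le_mul_of_nonneg_right h6 h5.le
  rw [h2, one_mul] at h7
  calc _ ≤ _ := h7
    _ = R ^ D * wt (fun i => - d i) z * (ψ z ^ D * ψ z ^ (-D)) := by ring
    _ = _ := by rw [h4, mul_one]

set_option maxHeartbeats 1000000 in
lemma FF_mem_fin {k m : ℕ} {ψ : (Fin m → ℝ) → ℝ} (hψ : Core ψ) {d : Fin m → ℝ} (hd : ∀ i, 0 < d i)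
    {D : ℝ} (hDd : D = ∑ i, d i) (hD : 0 < D) (c : Fin k → ℝ) {r : ℝ≥0∞} (hr1 : 1 ≤ r) (hr : r ≠ ⊤)
    {f : (Fin (k + m) → ℝ) → ℝ} (hf : Measurable f)
    (hmem : MemSpaceR (k + m) r (fun i => 1 - Fin.append c d i) f) :
    MemSpaceR (k + 1) r (fun i => 1 - (Fin.snoc c D : Fin (k+1) → ℝ) i)
      (fun v => FF ψ d D f (Fin.init v) (v (Fin.last k))) := by
  have hs0 : 0 ≤ r.toReal := ENNReal.toReal_nonneg
  have hFm := FF_meas (k := k) hψ d D hf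
  have hFm' : Measurable (fun v : Fin (k+1) → ℝ => FF ψ d D f (Fin.init v) (v (Fin.last k))) :=
    hFm.comp (snE k).symm.measurable
  rw [mem_iff hr _ hf] at hmem
  rw [mem_iff hr _ hFm']
  set s := r.toReal with hs
  rw [comp_append' (fun a => s * (1 - a) - 1)] at hmem
  rw [comp_snoc' (fun a => s * (1 - a) - 1)]
  set wx := wt (fun i => s * (1 - c i) - 1) with hwx
  have hwxm : Measurable wx := wt_meas _
  have hwm : ∀ a : Fin m → ℝ, Measurable (wt a) := wt_meas
  have hfx : Measurable (fun z : (Fin k → ℝ) × (Fin m → ℝ) => f (Fin.append z.1 z.2)) :=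
    hf.comp (app_meas k m)
  have hfx' : ∀ x : Fin k → ℝ, Measurable (fun y : Fin m → ℝ => f (Fin.append x y)) :=
    fun x => hfx.comp (by fun_prop : Measurable fun y : Fin m → ℝ => (x, y))
  rw [← (mp_app k m).lintegral_comp_emb (appE k m).measurableEmbedding] at hmem
  simp only [appE_apply, wt_append] at hmem
  have hm1 : Measurable (fun z : (Fin k → ℝ) × (Fin m → ℝ) => ‖f (Fin.append z.1 z.2)‖ₑ ^ s *
      ENNReal.ofReal (wx z.1 * wt (fun i => s * (1 - d i) - 1) z.2)) :=
    (hfx.enorm.pow_const s).mul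
      ((hwxm.comp measurable_fst).mul ((hwm _).comp measurable_snd)).ennreal_ofReal
  rw [lintegral_prod _ hm1.aemeasurable] at hmem
  rw [← (mp_sn k).lintegral_comp_emb (snE k).measurableEmbedding]
  simp only [snE_apply, wt_snoc, Fin.init_snoc, Fin.snoc_last]
  have hm2 : Measurable (fun z : (Fin k → ℝ) × ℝ => ‖FF ψ d D f z.1 z.2‖ₑ ^ s *
      ENNReal.ofReal (wx z.1 * z.2 ^ (s * (1 - D) - 1))) :=
    (hFm.enorm.pow_const s).mul
      ((hwxm.comp measurable_fst).mul (measurable_snd.pow_const _)).ennreal_ofReal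
  rw [lintegral_prod _ hm2.aemeasurable]
  obtain ⟨R, hR, hRb⟩ := psi_wt hψ hd hDd
  obtain ⟨C, hC, hCb⟩ := jensen ((nu d).restrict (AA ψ))
    (by rw [Measure.restrict_apply_univ]; exact AA_fin hψ hd) hr1 hr
  set M : ℝ≥0∞ := C * ENNReal.ofReal R * ENNReal.ofReal (1 / D) with hM
  have hMt : M ≠ ⊤ := by
    refine ENNReal.mul_ne_top (ENNReal.mul_ne_top hC ENNReal.ofReal_ne_top) ENNReal.ofReal_ne_top
  refine lt_of_le_of_lt ?_ (ENNReal.mul_lt_top (lt_top_iff_ne_top.2 hMt) hmem)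
  rw [← lintegral_const_mul' _ _ hMt]
  refine lintegral_mono_ae ?_
  filter_upwards [ae_vol_pos k] with x hx
  have hwx0 : 0 < wx x := wt_pos _ hx
  set h : (Fin m → ℝ) → ℝ≥0∞ := fun z => ‖f (Fin.append x z)‖ₑ ^ s *
    (ENNReal.ofReal (wt (fun i => 1 - d i) z) ^ s * ENNReal.ofReal (wt (fun i => - d i) z)) with hh
  have hhm : Measurable h := by
    have := hfx' x
    fun_prop
  have hpush := push hψ d hDd hD hhm
  have key : ∀ t : ℝ, 0 < t →
      ‖FF ψ d D f x t‖ₑ ^ s * ENNReal.ofReal (wx x * t ^ (s * (1 - D) - 1)) ≤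
      ENNReal.ofReal (wx x) * (C * ENNReal.ofReal R) *
        (ENNReal.ofReal (t ^ (D - 1)) * ∫⁻ y in AA ψ, h (TT ψ (t, y)) ∂(nu d)) := by
    intro t ht
    have hTm : Measurable fun y => TT ψ (t, y) := (TT_meas hψ).comp (by fun_prop)
    have hgm : Measurable fun y => f (Fin.append x (TT ψ (t, y))) * wt (fun i => 1 - d i) (TT ψ (t, y)) :=
      ((hfx' x).comp hTm).mul ((hwm _).comp hTm)
    have j := hCb _ hgm
    have step : (∫⁻ y in AA ψ, ‖f (Fin.append x (TT ψ (t, y))) * wt (fun i => 1 - d i) (TT ψ (t, y))‖ₑ ^ s ∂(nu d))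
        * ENNReal.ofReal (t ^ (-D)) ≤ ENNReal.ofReal R * ∫⁻ y in AA ψ, h (TT ψ (t, y)) ∂(nu d) := by
      rw [← lintegral_const_mul' _ _ ENNReal.ofReal_ne_top,
        ← lintegral_mul_const' _ _ ENNReal.ofReal_ne_top]
      refine lintegral_mono_ae ?_
      filter_upwards [ae_restrict_mem (AA_meas hψ)] with y hy
      have hz := TT_mem hψ ht hy.1
      have hpz := TT_psi hψ ht hy.1
      set z := TT ψ (t, y) with hzdef
      have hle : ENNReal.ofReal (t ^ (-D)) ≤ ENNReal.ofReal R * ENNReal.ofReal (wt (fun i => - d i) z) := by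
        rw [← ENNReal.ofReal_mul hR.le]
        refine ENNReal.ofReal_le_ofReal ?_
        have := hRb z hz
        rwa [hpz] at this
      rw [enorm_mul, ENNReal.mul_rpow_of_nonneg _ _ hs0, Real.enorm_of_nonneg (wt_pos _ hz).le]
      calc _ ≤ ‖f (Fin.append x z)‖ₑ ^ s * ENNReal.ofReal (wt (fun i => 1 - d i) z) ^ s *
          (ENNReal.ofReal R * ENNReal.ofReal (wt (fun i => - d i) z)) := by gcongr
        _ = _ := by simp only [hh]; ring
    have ht1 : 0 < t ^ (D - 1) := Real.rpow_pos_of_pos ht _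
    have et : (t ^ (D - 1)) ^ s * (wx x * t ^ (s * (1 - D) - 1)) = wx x * t ^ (D - 1) * t ^ (-D) := by
      rw [← Real.rpow_mul ht.le, mul_left_comm, mul_assoc, ← Real.rpow_add ht, ← Real.rpow_add ht]
      congr 2; ring
    have et' : ENNReal.ofReal (t ^ (D - 1)) ^ s * ENNReal.ofReal (wx x * t ^ (s * (1 - D) - 1)) =
        ENNReal.ofReal (wx x) * ENNReal.ofReal (t ^ (D - 1)) * ENNReal.ofReal (t ^ (-D)) := by
      rw [ENNReal.ofReal_rpow_of_nonneg ht1.le hs0, ← ENNReal.ofReal_mul (by positivity), et,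
        ENNReal.ofReal_mul (by positivity), ENNReal.ofReal_mul (by positivity)]
    unfold FF
    rw [enorm_mul, ENNReal.mul_rpow_of_nonneg _ _ hs0, Real.enorm_of_nonneg ht1.le]
    set I := ∫⁻ y in AA ψ, ‖f (Fin.append x (TT ψ (t, y))) * wt (fun i => 1 - d i) (TT ψ (t, y))‖ₑ ^ s ∂(nu d)
    set J := ∫ y in AA ψ, f (Fin.append x (TT ψ (t, y))) * wt (fun i => 1 - d i) (TT ψ (t, y)) ∂(nu d)
    calc _ = ‖J‖ₑ ^ s * (ENNReal.ofReal (t ^ (D - 1)) ^ s *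
            ENNReal.ofReal (wx x * t ^ (s * (1 - D) - 1))) := by ring
      _ ≤ (C * I) * (ENNReal.ofReal (wx x) * ENNReal.ofReal (t ^ (D - 1)) * ENNReal.ofReal (t ^ (-D))) := by
          rw [et']; gcongr
      _ = ENNReal.ofReal (wx x) * C * ENNReal.ofReal (t ^ (D - 1)) * (I * ENNReal.ofReal (t ^ (-D))) := by ring
      _ ≤ ENNReal.ofReal (wx x) * C * ENNReal.ofReal (t ^ (D - 1)) *
          (ENNReal.ofReal R * ∫⁻ y in AA ψ, h (TT ψ (t, y)) ∂(nu d)) := by gcongr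
      _ = _ := by ring
  calc _ ≤ ∫⁻ t, ENNReal.ofReal (wx x) * (C * ENNReal.ofReal R) *
        (ENNReal.ofReal (t ^ (D - 1)) * ∫⁻ y in AA ψ, h (TT ψ (t, y)) ∂(nu d)) ∂hl := by
        refine lintegral_mono_ae ?_
        filter_upwards [ae_restrict_mem measurableSet_Ioi] with t ht using key t ht
    _ = M * (ENNReal.ofReal (wx x) * ∫⁻ z, h z ∂(nu d)) := by
        rw [lintegral_const_mul' _ _ (ENNReal.mul_ne_top ENNReal.ofReal_ne_top
          (ENNReal.mul_ne_top hC ENNReal.ofReal_ne_top)), hpush, hM]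
        ring
    _ = _ := by
        congr 1
        rw [lint_nu d hhm, ← lintegral_const_mul' _ _ ENNReal.ofReal_ne_top]
        refine lintegral_congr_ae ?_
        filter_upwards [ae_vol_pos m] with z hz
        have w1 := wt_pos (fun i => 1 - d i) hz
        have w2 := wt_pos (fun i => - d i) hz
        have w3 := wt_pos (fun i => d i - 1) hz
        have ew : wt (fun i => s * (1 - d i) - 1) z =
            wt (fun i => d i - 1) z * (wt (fun i => 1 - d i) z ^ s * wt (fun i => - d i) z) := by
          rw [wt_rpow _ _ hz, ← wt_add _ _ hz, ← wt_add _ _ hz]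
          congr 1; ext i; ring
        rw [ew, ENNReal.ofReal_mul hwx0.le, ENNReal.ofReal_mul w3.le, ENNReal.ofReal_mul (by positivity),
          ← ENNReal.ofReal_rpow_of_nonneg w1.le hs0]
        simp only [hh]
        ring

lemma FF_mem_top {k m : ℕ} {ψ : (Fin m → ℝ) → ℝ} (hψ : Core ψ) {d : Fin m → ℝ} (hd : ∀ i, 0 < d i)
    {D : ℝ} (hDd : D = ∑ i, d i) (hD : 0 < D) (c : Fin k → ℝ)
    {f : (Fin (k + m) → ℝ) → ℝ} (hf : Measurable f)
    (hmem : MemSpaceR (k + m) ⊤ (fun i => 1 - Fin.append c d i) f) :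
    MemSpaceR (k + 1) ⊤ (fun i => 1 - (Fin.snoc c D : Fin (k+1) → ℝ) i)
      (fun v => FF ψ d D f (Fin.init v) (v (Fin.last k))) := by
  have hFm := FF_meas (k := k) hψ d D hf
  have hFm' : Measurable (fun v : Fin (k+1) → ℝ => FF ψ d D f (Fin.init v) (v (Fin.last k))) :=
    hFm.comp (snE k).symm.measurable
  have h := hmem.2
  simp only [if_true] at h
  obtain ⟨K, hK⟩ := h
  refine ⟨hFm'.aestronglyMeasurable, ?_⟩
  simp only [if_true]
  have hK : ∀ᵐ x ∂(vol (k + m)), |f x * wt (fun i => 1 - Fin.append c d i) x| ≤ K := hK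
  rw [comp_append' (fun a => 1 - a), ← (mp_app k m).map_eq] at hK
  have hK2 := Measure.ae_ae_of_ae_prod (ae_of_ae_map (appE k m).measurable.aemeasurable hK)
  simp only [appE_apply, wt_append] at hK2
  refine ⟨K * ((nu d).restrict (AA ψ)).real univ, ?_⟩
  change ∀ᵐ v ∂(vol (k + 1)), |FF ψ d D f (Fin.init v) (v (Fin.last k)) *
    wt (fun i => 1 - (Fin.snoc c D : Fin (k+1) → ℝ) i) v| ≤ _
  rw [comp_snoc' (fun a => 1 - a), ← (mp_sn k).map_eq,
    (snE k).measurableEmbedding.ae_map_iff]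
  simp only [snE_apply, wt_snoc, Fin.init_snoc, Fin.snoc_last]
  have hwm := wt_meas (fun i => 1 - c i)
  rw [Measure.ae_prod_iff_ae_ae (measurableSet_le (by fun_prop) (by fun_prop))]
  filter_upwards [hK2, ae_vol_pos k] with x hx hxp
  have hwx := wt_pos (fun i => 1 - c i) hxp
  set W := wt (fun i => 1 - c i) x
  filter_upwards [ae_push hψ d hDd hD hx, ae_restrict_mem measurableSet_Ioi] with t ht htp
  have htp : 0 < t := htp
  have : IsFiniteMeasure ((nu d).restrict (AA ψ)) :=
    ⟨by rw [Measure.restrict_apply_univ]; exact AA_fin hψ hd⟩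
  have hn := norm_integral_le_of_norm_le_const (μ := (nu d).restrict (AA ψ))
    (f := fun y => f (Fin.append x (TT ψ (t, y))) * wt (fun i => 1 - d i) (TT ψ (t, y)))
    (C := K / W) (by
      filter_upwards [ht] with y hy
      rw [le_div_iff₀ hwx, Real.norm_eq_abs]
      calc _ = |f (Fin.append x (TT ψ (t, y))) * (W * wt (fun i => 1 - d i) (TT ψ (t, y)))| := by
            rw [mul_left_comm, abs_mul, abs_mul, abs_mul, abs_of_pos hwx]; ring
        _ ≤ K := hy)
  have ht1 : 0 < t ^ (D - 1) := Real.rpow_pos_of_pos htp _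
  have ht2 : 0 < t ^ (1 - D) := Real.rpow_pos_of_pos htp _
  have ht3 : t ^ (D - 1) * t ^ (1 - D) = 1 := by
    rw [← Real.rpow_add htp]; simp
  unfold FF
  rw [Real.norm_eq_abs] at hn
  set J := ∫ y in AA ψ, f (Fin.append x (TT ψ (t, y))) * wt (fun i => 1 - d i) (TT ψ (t, y)) ∂(nu d)
  rw [abs_mul, abs_mul, abs_of_pos ht1, abs_of_pos (mul_pos hwx ht2)]
  calc _ = |J| * W * (t ^ (D - 1) * t ^ (1 - D)) := by ring
    _ = |J| * W := by rw [ht3, mul_one]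
    _ ≤ (K / W * ((nu d).restrict (AA ψ)).real univ) * W := by gcongr
    _ = _ := by field_simp

lemma mem_section {k m : ℕ} {r : ℝ≥0∞} {c : Fin k → ℝ} {d : Fin m → ℝ}
    {f : (Fin (k + m) → ℝ) → ℝ} (hf : Measurable f)
    (hmem : MemSpaceR (k + m) r (fun i => 1 - Fin.append c d i) f) :
    ∀ᵐ x ∂(vol k), MemSpaceR m r (fun i => 1 - d i) (fun y => f (Fin.append x y)) := by
  have hfx : Measurable (fun z : (Fin k → ℝ) × (Fin m → ℝ) => f (Fin.append z.1 z.2)) :=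
    hf.comp (app_meas k m)
  have hfx' : ∀ x : Fin k → ℝ, Measurable (fun y : Fin m → ℝ => f (Fin.append x y)) :=
    fun x => hfx.comp (by fun_prop : Measurable fun y : Fin m → ℝ => (x, y))
  by_cases hr : r = ⊤
  · subst hr
    have h := hmem.2
    simp only [if_true] at h
    obtain ⟨K, hK⟩ := h
    have hK : ∀ᵐ x ∂(vol (k + m)), |f x * wt (fun i => 1 - Fin.append c d i) x| ≤ K := hK
    rw [comp_append' (fun a => 1 - a), ← (mp_app k m).map_eq] at hK
    have hK2 := Measure.ae_ae_of_ae_prod (ae_of_ae_map (appE k m).measurable.aemeasurable hK)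
    simp only [appE_apply, wt_append] at hK2
    filter_upwards [hK2, ae_vol_pos k] with x hx hxp
    have hwx := wt_pos (fun i => 1 - c i) hxp
    refine ⟨(hfx' x).aestronglyMeasurable, ?_⟩
    simp only [if_true]
    refine ⟨K / wt (fun i => 1 - c i) x, ?_⟩
    filter_upwards [hx] with y hy
    change |f (Fin.append x y) * wt (fun i => 1 - d i) y| ≤ _
    rw [le_div_iff₀ hwx]
    calc _ = |f (Fin.append x y) * (wt (fun i => 1 - c i) x * wt (fun i => 1 - d i) y)| := by
            rw [mul_left_comm, abs_mul, abs_mul, abs_mul, abs_of_pos hwx]; ring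
      _ ≤ K := hy
  · rw [mem_iff hr _ hf, comp_append' (fun a => r.toReal * (1 - a) - 1),
      ← (mp_app k m).lintegral_comp_emb (appE k m).measurableEmbedding] at hmem
    simp only [appE_apply, wt_append] at hmem
    have hm1 : Measurable (fun z : (Fin k → ℝ) × (Fin m → ℝ) => ‖f (Fin.append z.1 z.2)‖ₑ ^ r.toReal *
        ENNReal.ofReal (wt (fun i => r.toReal * (1 - c i) - 1) z.1 *
          wt (fun i => r.toReal * (1 - d i) - 1) z.2)) :=
      (hfx.enorm.pow_const _).mul
        (((wt_meas _).comp measurable_fst).mul ((wt_meas _).comp measurable_snd)).ennreal_ofReal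
    rw [lintegral_prod _ hm1.aemeasurable] at hmem
    filter_upwards [ae_lt_top hm1.lintegral_prod_right' hmem.ne, ae_vol_pos k] with x hx hxp
    rw [mem_iff hr _ (hfx' x)]
    have hwx := wt_pos (fun i => r.toReal * (1 - c i) - 1) hxp
    simp_rw [ENNReal.ofReal_mul hwx.le, mul_left_comm _ (ENNReal.ofReal (wt (fun i => r.toReal * (1 - c i) - 1) x)) _] at hx
    rw [lintegral_const_mul' _ _ ENNReal.ofReal_ne_top] at hx
    have h0 : ENNReal.ofReal (wt (fun i => r.toReal * (1 - c i) - 1) x) ≠ 0 := by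
      simpa using hwx
    exact (ENNReal.lt_top_of_mul_ne_top_right hx.ne h0)

lemma core_of_cost {m : ℕ} {φ : (Fin m → ℝ) → ℝ} (hφ : IsCostFun m φ) {s : Fin m → ℝ}
    (hs : s ∈ posOrth m) : Core ((posOrth m).indicator (fun y => φ (fun i => s i * y i))) := by
  classical
  obtain ⟨R, hR, hb⟩ := cost_bound hφ
  refine ⟨?_, ?_, ?_, ?_⟩
  · have : ContinuousOn (fun x : Fin m → ℝ => φ (fun i => s i * x i)) (posOrth m) :=
      hφ.1.continuousOn.comp (by fun_prop) (fun x hx => mul_mem hs hx)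
    rw [← Set.piecewise_eq_indicator]
    exact this.measurable_piecewise continuousOn_const (measurableSet_posOrth m)
  · intro x hx
    rw [indicator_of_mem hx]
    exact hφ.2.1 _ (mul_mem hs hx)
  · intro lam hl x hx
    have hx' : (fun i => lam * x i) ∈ posOrth m := fun i => mul_pos hl (hx i)
    rw [indicator_of_mem hx, indicator_of_mem hx', ← hφ.2.2.1 lam hl _ (mul_mem hs hx)]
    congr 1; ext i; ring
  · have hsum : 0 ≤ ∑ j, (s j)⁻¹ := Finset.sum_nonneg (fun j _ => (inv_pos.2 (hs j)).le)
    refine ⟨R * (1 + ∑ j, (s j)⁻¹), by positivity, fun x hx i => ?_⟩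
    rw [indicator_of_mem hx]
    have h1 := hb _ (mul_mem hs hx) i
    have h0 := hφ.2.1 _ (mul_mem hs hx)
    have h2 : (s i)⁻¹ ≤ 1 + ∑ j, (s j)⁻¹ := by
      have := Finset.single_le_sum (f := fun j => (s j)⁻¹) (fun j _ => (inv_pos.2 (hs j)).le) (Finset.mem_univ i)
      linarith
    set Q := φ (fun i => s i * x i)
    have h3 : x i ≤ (s i)⁻¹ * (R * Q) := by
      rw [le_inv_mul_iff₀ (hs i)]; exact h1
    calc x i ≤ (s i)⁻¹ * (R * Q) := h3
      _ ≤ (1 + ∑ j, (s j)⁻¹) * (R * Q) := by gcongr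
      _ = _ := by ring

lemma per_s {k m : ℕ} (hm : 0 < m) {q : (Fin (k + 1) → ℝ) → ℝ} (hq : IsCostFun (k + 1) q)
    {φ : (Fin m → ℝ) → ℝ} (hφ : IsCostFun m φ) {r : ℝ≥0∞} (hr : r = 1 ∨ r = 2 ∨ r = ⊤)
    {c : Fin k → ℝ} (hc : ∀ i, 0 < c i) {d : Fin m → ℝ} (hd : ∀ j, 0 < d j)
    (hqInj : PiqInj (k + 1) r q (Fin.snoc c (∑ j, d j)))
    {f : (Fin (k + m) → ℝ) → ℝ} (hf : Measurable f)
    (hmem : MemSpaceR (k + m) r (fun i => 1 - Fin.append c d i) f)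
    (hz : ∀ p0 : ℝ, 0 < p0 → ∀ p ∈ posOrth (k + m), Piq (k + m) (nestedCost k m q φ) f p0 p = 0)
    {s : Fin m → ℝ} (hs : s ∈ posOrth m) :
    ∀ᵐ x ∂(vol k), ∀ p0 : ℝ, 0 < p0 → Piq m φ (fun y => f (Fin.append x y)) p0 s = 0 := by
  obtain ⟨D, hDd⟩ : ∃ D, D = ∑ j, d j := ⟨_, rfl⟩
  rw [← hDd] at hqInj
  have : Nonempty (Fin m) := ⟨⟨0, hm⟩⟩
  have hD : 0 < D := by
    rw [hDd]; exact Finset.sum_pos (fun i _ => hd i) Finset.univ_nonempty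
  have hψ := core_of_cost hφ hs
  obtain ⟨ψ, hψd⟩ : ∃ ψ, ψ = (posOrth m).indicator (fun y => φ (fun i => s i * y i)) := ⟨_, rfl⟩
  rw [← hψd] at hψ
  have hψv : ∀ y ∈ posOrth m, ψ y = φ (fun i => s i * y i) := fun y hy => by
    rw [hψd, indicator_of_mem hy]
  have hcd : ∀ i, 0 < Fin.append c d i := append_mem (x := c) (y := d) hc hd
  have hn := nested_cost hq hφ
  have hfb := box_int hr hcd hmem
  have hFmem : MemSpaceR (k + 1) r (fun i => 1 - (Fin.snoc c D : Fin (k+1) → ℝ) i)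
      (fun v => FF ψ d D f (Fin.init v) (v (Fin.last k))) := by
    rcases hr with rfl | rfl | rfl
    · exact FF_mem_fin hψ hd hDd hD c le_rfl (by simp) hf hmem
    · exact FF_mem_fin hψ hd hDd hD c (by norm_num) (by simp) hf hmem
    · exact FF_mem_top hψ hd hDd hD c hf hmem
  -- the fibrewise identity
  have fib : ∀ (x : Fin k → ℝ) (K : ℝ → ℝ),
      Integrable (fun y => K (ψ y) * f (Fin.append x y)) (vol m) →
      ∫ t, K t * FF ψ d D f x t ∂hl = D⁻¹ * ∫ y, K (ψ y) * f (Fin.append x y) ∂(vol m) := by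
    intro x K hI
    rw [← int_push hψ d hDd hD hI]
    refine integral_congr_ae ?_
    filter_upwards [ae_restrict_mem measurableSet_Ioi] with t ht
    have ht : 0 < t := ht
    unfold FF
    rw [mul_left_comm, ← integral_const_mul]
    congr 1
    refine integral_congr_ae ?_
    filter_upwards [ae_restrict_mem (AA_meas hψ)] with y hy
    rw [TT_psi hψ ht hy.1]
    ring
  have hFz : ∀ᵐ v ∂(vol (k + 1)), FF ψ d D f (Fin.init v) (v (Fin.last k)) = 0 := by
    refine hqInj _ hFmem (fun p0 hp0 p hp => ?_)
    unfold Piq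
    change ∫ v, _ ∂(vol (k + 1)) = 0
    rw [← (mp_sn k).integral_comp (snE k).measurableEmbedding]
    simp only [snE_apply, Fin.init_snoc, Fin.snoc_last]
    set K : (Fin k → ℝ) → ℝ → ℝ := fun x t =>
      max 0 (p0 - q (fun i => p i * (Fin.snoc x t : Fin (k+1) → ℝ) i)) with hK
    change ∫ z : (Fin k → ℝ) × ℝ, K z.1 z.2 * FF ψ d D f z.1 z.2 ∂((vol k).prod hl) = 0
    by_cases hI : Integrable (fun z : (Fin k → ℝ) × ℝ => K z.1 z.2 * FF ψ d D f z.1 z.2) ((vol k).prod hl)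
    swap
    · exact integral_undef hI
    rw [integral_prod _ hI]
    set p1 : Fin (k + m) → ℝ := Fin.append (Fin.init p) (fun j => p (Fin.last k) * s j) with hp1d
    have hp1 : p1 ∈ posOrth (k + m) :=
      append_mem (fun i => hp _) (fun j => mul_pos (hp _) (hs j))
    have hgi := kern_int hn hf.aestronglyMeasurable hfb hp1 hp0
    have hg0 := hz p0 hp0 p1 hp1
    unfold Piq at hg0
    change ∫ v, _ ∂(vol (k + m)) = 0 at hg0
    rw [← (mp_app k m).integral_comp (appE k m).measurableEmbedding] at hg0
    rw [← (mp_app k m).integrable_comp_emb (appE k m).measurableEmbedding] at hgi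
    have hcong : ∀ᵐ z ∂((vol k).prod (vol m)),
        max 0 (p0 - nestedCost k m q φ (fun i => p1 i * (appE k m z) i)) * f (appE k m z) =
        K z.1 (ψ z.2) * f (Fin.append z.1 z.2) := by
      have hpos : ∀ᵐ z ∂((vol k).prod (vol m)), z.2 ∈ posOrth m :=
        Measure.quasiMeasurePreserving_snd.ae (ae_vol_pos m)
      filter_upwards [hpos] with z hz2
      have e1 : (fun i => p1 i * (appE k m z) i) =
          Fin.append (fun i => p (Fin.castSucc i) * z.1 i) (fun j => p (Fin.last k) * (s j * z.2 j)) := by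
        ext i
        rw [appE_apply]
        refine Fin.addCases (fun i => ?_) (fun i => ?_) i
        · simp [p1, Fin.init]
        · simp [p1, mul_assoc]
      have e2 : (fun i => p i * (Fin.snoc z.1 (ψ z.2) : Fin (k+1) → ℝ) i) =
          (Fin.snoc (fun i => p (Fin.castSucc i) * z.1 i) (p (Fin.last k) * ψ z.2) : Fin (k+1) → ℝ) := by
        ext i
        refine Fin.lastCases ?_ (fun i => ?_) i <;> simp
      rw [e1, nested_append, hφ.2.2.1 _ (hp _) _ (mul_mem hs hz2), ← hψv _ hz2]
      simp only [hK]
      rw [e2]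
      rfl
    have hgi2 : Integrable (fun z : (Fin k → ℝ) × (Fin m → ℝ) => K z.1 (ψ z.2) * f (Fin.append z.1 z.2))
        ((vol k).prod (vol m)) := hgi.congr hcong
    rw [integral_congr_ae hcong, integral_prod _ hgi2] at hg0
    calc _ = ∫ x, D⁻¹ * ∫ y, K x (ψ y) * f (Fin.append x y) ∂(vol m) ∂(vol k) := by
          refine integral_congr_ae ?_
          filter_upwards [hgi2.prod_right_ae] with x hx
          exact fib x (K x) hx
      _ = 0 := by rw [integral_const_mul, hg0, mul_zero]
  rw [← (mp_sn k).map_eq, (snE k).measurableEmbedding.ae_map_iff] at hFz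
  simp only [snE_apply, Fin.init_snoc, Fin.snoc_last] at hFz
  have hFz2 := Measure.ae_ae_of_ae_prod hFz
  filter_upwards [hFz2, mem_section hf hmem] with x hx hxm p0 hp0
  have hI := kern_int hφ hxm.1 (box_int hr hd hxm) hs hp0
  have hcong : ∀ᵐ y ∂(vol m), max 0 (p0 - φ (fun i => s i * y i)) * f (Fin.append x y) =
      (fun t => max 0 (p0 - t)) (ψ y) * f (Fin.append x y) := by
    filter_upwards [ae_vol_pos m] with y hy
    rw [hψv y hy]
  have h1 := fib x (fun t => max 0 (p0 - t)) (hI.congr hcong)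
  have h2 : ∫ t, (fun t => max 0 (p0 - t)) t * FF ψ d D f x t ∂hl = 0 := by
    rw [← integral_zero ℝ ℝ (μ := hl)]
    refine integral_congr_ae ?_
    filter_upwards [hx] with t ht
    rw [ht, mul_zero]
  rw [h2] at h1
  unfold Piq
  change ∫ y, _ ∂(vol m) = 0
  rw [integral_congr_ae hcong]
  exact (mul_eq_zero.1 h1.symm).resolve_left (inv_ne_zero hD.ne')

lemma mem_congr {n : ℕ} {r : ℝ≥0∞} {a : Fin n → ℝ} {f g : (Fin n → ℝ) → ℝ}
    (hfg : f =ᵐ[vol n] g) (h : MemSpaceR n r a f) : MemSpaceR n r a g := by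
  refine ⟨h.1.congr hfg, ?_⟩
  have h2 := h.2
  split_ifs at h2 ⊢ with hr
  · obtain ⟨K, hK⟩ := h2
    refine ⟨K, ?_⟩
    filter_upwards [hK, hfg] with x hx hx2
    rwa [← hx2]
  · refine Integrable.congr h2 ?_
    filter_upwards [hfg] with x hx2
    rw [hx2]

lemma inj_meas {k m : ℕ} (hm : 0 < m) {q : (Fin (k + 1) → ℝ) → ℝ} (hq : IsCostFun (k + 1) q)
    {φ : (Fin m → ℝ) → ℝ} (hφ : IsCostFun m φ) {r : ℝ≥0∞} (hr : r = 1 ∨ r = 2 ∨ r = ⊤)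
    {c : Fin k → ℝ} (hc : ∀ i, 0 < c i) {d : Fin m → ℝ} (hd : ∀ j, 0 < d j)
    (hqInj : PiqInj (k + 1) r q (Fin.snoc c (∑ j, d j))) (hφInj : PiqInj m r φ d)
    {f : (Fin (k + m) → ℝ) → ℝ} (hf : Measurable f)
    (hmem : MemSpaceR (k + m) r (fun i => 1 - Fin.append c d i) f)
    (hz : ∀ p0 : ℝ, 0 < p0 → ∀ p ∈ posOrth (k + m), Piq (k + m) (nestedCost k m q φ) f p0 p = 0) :
    ∀ᵐ x ∂(vol (k + m)), f x = 0 := by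
  obtain ⟨S, hSc, hSd⟩ := TopologicalSpace.exists_countable_dense (posOrth m)
  have h1 : ∀ᵐ x ∂(vol k), ∀ s ∈ S, ∀ p0 : ℝ, 0 < p0 →
      Piq m φ (fun y => f (Fin.append x y)) p0 s = 0 := by
    rw [ae_ball_iff hSc]
    intro s _
    exact per_s hm hq hφ hr hc hd hqInj hf hmem hz s.2
  rw [← (mp_app k m).map_eq, (appE k m).measurableEmbedding.ae_map_iff]
  rw [Measure.ae_prod_iff_ae_ae]
  · filter_upwards [h1, mem_section hf hmem] with x hx hxm
    exact hφInj _ hxm (fun p0 hp0 => piq_zero_of_dense hφ hxm.1 (box_int hr hd hxm) hp0 hSd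
      (fun s hs => hx s hs p0 hp0))
  · exact (hf.comp (appE k m).measurable) (measurableSet_singleton 0)


/-- Injectivity of the profit operator is preserved under composition of cost
functions: if `Π_q` is injective on `L^r_{I-c'}(ℝ^{k+1}_+)` with `c' = (c, d₁+⋯+d_m)`
and `Π_φ` is injective on `L^r_{I-d}(ℝ^m_+)`, then `q̃(x,y) = q(x,φ(y))` satisfies the
cost-function conditions and `Π_{q̃}` is injective on `L^r_{I-c''}(ℝ^{k+m}_+)`,
`c'' = (c,d)`. -/
theorem piqInj_nestedCost
    (k m : ℕ) (hk : 1 ≤ k) (hm : 2 ≤ m)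
    (q : (Fin (k + 1) → ℝ) → ℝ) (hq : IsCostFun (k + 1) q)
    (φ : (Fin m → ℝ) → ℝ) (hφ : IsCostFun m φ)
    (r : ℝ≥0∞) (hr : r = 1 ∨ r = 2 ∨ r = ⊤)
    (c : Fin k → ℝ) (hc : ∀ i, 0 < c i)
    (d : Fin m → ℝ) (hd : ∀ j, 0 < d j)
    (hqInj : PiqInj (k + 1) r q (Fin.snoc c (∑ j, d j)))
    (hφInj : PiqInj m r φ d) :
    IsCostFun (k + m) (nestedCost k m q φ) ∧
      PiqInj (k + m) r (nestedCost k m q φ) (Fin.append c d) := by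
  refine ⟨nested_cost hq hφ, fun f hmem hz => ?_⟩
  have hfg := hmem.1.ae_eq_mk
  have hgm : Measurable (hmem.1.mk f) := hmem.1.stronglyMeasurable_mk.measurable
  have h0 := inj_meas (by omega) hq hφ hr hc hd hqInj hφInj hgm (mem_congr hfg hmem)
    (fun p0 hp0 p hp => by
      rw [← hz p0 hp0 p hp]; unfold Piq
      refine integral_congr_ae ?_
      filter_upwards [hfg] with x hx
      rw [hx])
  filter_upwards [h0, hfg] with x hx hx2
  rw [hx2, hx]
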